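/- Let F be an algebraically closed field of characteristic ≠ 2 and R = F[x₁,…,x_m] ⊗ Λ(ξ₁,…,ξ_n). Let φ : R → R be a parity-preserving F-algebra endomorphism with φ(x_i) = f_i and φ(ξ_k) = q_k. Assume: (a) det(∂f_i/∂x_j) ∈ F^× + J and det(∂q_k/∂ξ_l) ∈ F^× + J (super-Jacobian condition), and (b) for every maximal Z₂-homogeneous ideal I of R, the ideal generated by φ(I) is again a maximal Z₂-homogeneous ideal. Then φ is an automorphism of R. -/

import Mathlib

open TensorProduct MvPolynomial

noncomputable section

variable (F : Type*) [Field F] (m n : ℕ)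

abbrev PolyA := MvPolynomial (Fin m) F
abbrev ExtA := ExteriorAlgebra F (Fin n → F)
abbrev SAlg := PolyA F m ⊗[F] ExtA F n

/-- even coordinate x_i -/
def xg (i : Fin m) : SAlg F m n := (X i) ⊗ₜ 1

/-- odd coordinate ξ_k -/
def xig (k : Fin n) : SAlg F m n := 1 ⊗ₜ (ExteriorAlgebra.ι F (Pi.single k 1))

/-- ideal J generated by the odd coordinates -/
def Jg : Ideal (SAlg F m n) := Ideal.span (Set.range (xig F m n))

/-- the ideal J² -/
def Jsq : Ideal (SAlg F m n) :=
  Ideal.span {r | ∃ u ∈ Jg F m n, ∃ v ∈ Jg F m n, r = u * v}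

/-- the parity involution, identity on polynomials and negation of ξ's -/
def parityInvol : SAlg F m n →ₐ[F] SAlg F m n :=
  Algebra.TensorProduct.map (AlgHom.id F (PolyA F m)) (ExteriorAlgebra.map (-LinearMap.id))

/-- the even part, as the subalgebra fixed by the parity involution -/
def evenA : Subalgebra F (SAlg F m n) :=
  AlgHom.equalizer (parityInvol F m n) (AlgHom.id F (SAlg F m n))

/-- the odd part, the (-1)-eigenspace of the parity involution -/
def oddP : Submodule F (SAlg F m n) :=
  LinearMap.ker ((parityInvol F m n).toLinearMap + LinearMap.id)

/-- a Z₂-homogeneous ideal -/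
def IsHomog (I : Ideal (SAlg F m n)) : Prop :=
  ∀ a ∈ evenA F m n, ∀ b ∈ oddP F m n, a + b ∈ I → a ∈ I ∧ b ∈ I

/-- a maximal Z₂-homogeneous ideal -/
def IsMaxHomog (I : Ideal (SAlg F m n)) : Prop :=
  IsHomog F m n I ∧ I ≠ ⊤ ∧ ∀ I', IsHomog F m n I' → I' ≠ ⊤ → I ≤ I' → I' = I

/-- the canonical projection R → R/J ≅ F[x₁,…,x_m] -/
def projP : SAlg F m n →ₐ[F] PolyA F m :=
  Algebra.TensorProduct.lift (AlgHom.id F (PolyA F m))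
    ((Algebra.ofId F (PolyA F m)).comp ExteriorAlgebra.algebraMapInv)
    (fun _ _ => Commute.all _ _)

/-- determinant of a square matrix over a possibly noncommutative ring -/
def sdet {R : Type*} [Ring R] {N : ℕ} (M : Matrix (Fin N) (Fin N) R) : R :=
  ∑ σ : Equiv.Perm (Fin N),
    (Equiv.Perm.sign σ : ℤ) • ((List.finRange N).map fun i => M (σ i) i).prod

/-- the even super derivation ∂/∂x_j of R -/
def Dx (j : Fin m) : SAlg F m n →ₗ[F] SAlg F m n :=
  TensorProduct.map (pderiv j).toLinearMap LinearMap.id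

/-- the odd super derivation ∂/∂ξ_l of R -/
def Dxi (l : Fin n) : SAlg F m n →ₗ[F] SAlg F m n :=
  TensorProduct.map LinearMap.id
    (CliffordAlgebra.contractLeft (Q := (0 : QuadraticForm F (Fin n → F))) (LinearMap.proj l))

end

/-
An odd coordinate squares to zero and `F[x]` is reduced, so `φ` preserves `J` and induces an
endomorphism `ψ` of `F[x] = R/J`. The maximal homogeneous ideals of `R` are the preimages of the
maximal ideals of `F[x]`, so `ψ` carries maximal ideals to maximal ideals.

Write `ψ : A → B`. By the Jacobian criterion `ψ` is étale. As extended maximal ideals stay maximal,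
`ψ` is faithfully flat, and two `F`-points of `B` agree as soon as they agree on `A`. Hence the
ideal of the diagonal lies in the Jacobson radical of `B ⊗[A] B`; being finitely generated and
idempotent, it vanishes by Nakayama. So `ψ` is a faithfully flat epimorphism, which forces it to be
surjective.

The condition on the `∂q_k/∂ξ_l` then gives `J ≤ (im φ ∩ J) + J²`, and since `J` is nilpotent `φ`
is surjective. A surjective endomorphism of the noetherian ring `R` is injective.
-/

section Etale

variable {R S T : Type*} [CommRing R] [CommRing S] [CommRing T] [Algebra R S] [Algebra R T]
  [Algebra S T] [IsScalarTower R S T]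

theorem formallyEtale_of_bijective_mapBaseChange [Algebra.FormallySmooth R T]
    (h : Function.Bijective (KaehlerDifferential.mapBaseChange R S T)) :
    Algebra.FormallyEtale S T where
  subsingleton_kaehlerDifferential := by
    refine subsingleton_of_forall_eq 0 fun ω => ?_
    obtain ⟨η, rfl⟩ := KaehlerDifferential.map_surjective R S T ω
    exact (KaehlerDifferential.exact_mapBaseChange_map R S T η).mpr (h.2 η)
  subsingleton_h1Cotangent := by
    refine subsingleton_of_forall_eq 0 fun c => ?_
    have hδ : Algebra.H1Cotangent.δ R S T c = 0 := h.1 <| by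
      rw [map_zero, Algebra.H1Cotangent.exact_δ_mapBaseChange R S T]
      exact ⟨c, rfl⟩
    obtain ⟨c', rfl⟩ := (Algebra.H1Cotangent.exact_map_δ R S T c).mp hδ
    rw [Subsingleton.elim c' 0, map_zero]

theorem formallyEtale_mvPolynomial_of_isUnit_jacobian {σ : Type*} [Fintype σ] [DecidableEq σ]
    [Algebra (MvPolynomial σ R) T] [IsScalarTower R (MvPolynomial σ R) T]
    [Algebra.FormallySmooth R T] (b : Module.Basis σ T (Ω[T⁄R]))
    (h : IsUnit (Matrix.of fun i j =>
      b.repr (KaehlerDifferential.D R T (algebraMap (MvPolynomial σ R) T (X i))) j).det) :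
    Algebra.FormallyEtale (MvPolynomial σ R) T := by
  apply formallyEtale_of_bijective_mapBaseChange (R := R)
  have hmat : LinearMap.toMatrix ((KaehlerDifferential.mvPolynomialBasis R σ).baseChange T) b
      (KaehlerDifferential.mapBaseChange R (MvPolynomial σ R) T) =
      (Matrix.of fun i j => b.repr
        (KaehlerDifferential.D R T (algebraMap (MvPolynomial σ R) T (X i))) j).transpose := by
    ext i j
    simp [LinearMap.toMatrix_apply]
  rw [← Matrix.det_transpose, ← hmat] at h
  exact (LinearEquiv.ofIsUnitDet h).bijective

end Etale

section Points

variable {F A B : Type*} [Field F] [CommRing A] [CommRing B]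
  [Algebra F A] [Algebra F B] [Algebra A B] [IsScalarTower F A B]

theorem algHom_eq_of_isMaximal_map
    (h : ∀ I : Ideal A, I.IsMaximal → (I.map (algebraMap A B)).IsMaximal)
    {f g : B →ₐ[F] F} (hfg : ∀ a : A, f (algebraMap A B a) = g (algebraMap A B a)) : f = g := by
  let p : A →ₐ[F] F := f.comp (IsScalarTower.toAlgHom F A B)
  have hp : (RingHom.ker p).IsMaximal :=
    RingHom.ker_isMaximal_of_surjective p fun c => ⟨algebraMap F A c, p.commutes c⟩
  have hker (q : B →ₐ[F] F) (hq : ∀ a, q (algebraMap A B a) = p a) :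
      (RingHom.ker p).map (algebraMap A B) = RingHom.ker q := by
    refine (h _ hp).eq_of_le (RingHom.ker_ne_top q) (Ideal.map_le_iff_le_comap.mpr fun a ha => ?_)
    exact (hq a).trans ha
  ext x
  have hx : x - algebraMap F B (f x) ∈ RingHom.ker f := by simp [RingHom.mem_ker]
  rw [← hker f fun _ => rfl, hker g fun a => (hfg a).symm, RingHom.mem_ker, map_sub,
    AlgHom.commutes, sub_eq_zero] at hx
  exact hx.symm

variable [IsAlgClosed F]

theorem exists_algHom_ker_eq [Algebra.FiniteType F B] (M : Ideal B) [M.IsMaximal] :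
    ∃ f : B →ₐ[F] F, RingHom.ker f = M := by
  let _ : Field (B ⧸ M) := Ideal.Quotient.field M
  have : Module.Finite F (B ⧸ M) := finite_of_finite_type_of_isJacobsonRing F (B ⧸ M)
  let e : F ≃ₐ[F] B ⧸ M := AlgEquiv.ofBijective (Algebra.ofId F (B ⧸ M))
    IsAlgClosed.algebraMap_bijective_of_isIntegral
  refine ⟨(e.symm : (B ⧸ M) →ₐ[F] F).comp (Ideal.Quotient.mkₐ F M), ?_⟩
  ext x
  simp [RingHom.mem_ker, Ideal.Quotient.eq_zero_iff_mem]

theorem kaehlerIdeal_le_jacobson_bot [Algebra.FiniteType F B]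
    (h : ∀ f g : B →ₐ[F] F, (∀ a : A, f (algebraMap A B a) = g (algebraMap A B a)) → f = g) :
    KaehlerDifferential.ideal A B ≤ Ideal.jacobson ⊥ := by
  have : Algebra.FiniteType A B := .of_restrictScalars_finiteType F A B
  have : Algebra.FiniteType F (B ⊗[A] B) := .trans (S := B) inferInstance inferInstance
  refine le_sInf fun M ⟨_, _⟩ => ?_
  obtain ⟨f, rfl⟩ := exists_algHom_ker_eq (F := F) M
  have heq : f.comp Algebra.TensorProduct.includeLeft =
      f.comp ((Algebra.TensorProduct.includeRight : B →ₐ[A] B ⊗[A] B).restrictScalars F) := by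
    refine h _ _ fun a => ?_
    simp
  rw [← KaehlerDifferential.span_range_eq_ideal, Ideal.span_le]
  rintro _ ⟨s, rfl⟩
  simpa [sub_eq_zero] using (DFunLike.congr_fun heq s).symm

end Points

section Epi

variable {A B : Type*} [CommRing A] [CommRing B] [Algebra A B]

theorem isEpi_of_kaehlerIdeal_le_jacobson_bot [Algebra.FormallyUnramified A B]
    [Algebra.EssFiniteType A B] (h : KaehlerDifferential.ideal A B ≤ Ideal.jacobson ⊥) :
    Algebra.IsEpi A B := by
  have hidem : IsIdempotentElem (KaehlerDifferential.ideal A B) :=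
    (Ideal.cotangent_subsingleton_iff _).mp <| inferInstanceAs <| Subsingleton (Ω[B⁄A])
  have hbot : KaehlerDifferential.ideal A B = ⊥ :=
    Submodule.eq_bot_of_le_smul_of_le_jacobson_bot _ _ (KaehlerDifferential.ideal_fg A B)
      hidem.ge h
  refine (Algebra.isEpi_iff_forall_one_tmul_eq A B).mpr fun b => sub_eq_zero.mp ?_
  rw [← Submodule.mem_bot (B ⊗[A] B), ← hbot]
  exact KaehlerDifferential.one_smul_sub_smul_one_mem_ideal A b

theorem faithfullyFlat_of_isMaximal_map [Module.Flat A B]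
    (h : ∀ I : Ideal A, I.IsMaximal → (I.map (algebraMap A B)).IsMaximal) :
    Module.FaithfullyFlat A B := by
  refine ⟨fun I hI => ?_⟩
  rw [Ideal.smul_top_eq_map]
  exact (Submodule.restrictScalars_eq_top_iff _ _ _).ne.mpr (h I hI).ne_top

theorem surjective_algebraMap_of_faithfullyFlat_of_isEpi [Module.FaithfullyFlat A B]
    [Algebra.IsEpi A B] : Function.Surjective (algebraMap A B) := by
  apply Module.FaithfullyFlat.surjective_of_tensorProduct (S := B)
  exact fun x => ⟨TensorProduct.lid' A B B x, (TensorProduct.lid' A B B).injective (by simp)⟩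

end Epi

section Jacobian

variable {F : Type*} [Field F] [IsAlgClosed F] {σ : Type*} [Fintype σ] [DecidableEq σ]

theorem surjective_of_isUnit_jacobian_of_isMaximal_map {B : Type*} [CommRing B] [Algebra F B]
    [Algebra.FormallySmooth F B] [Algebra.FinitePresentation F B] (b : Module.Basis σ B (Ω[B⁄F]))
    (φ : MvPolynomial σ F →ₐ[F] B)
    (hdet : IsUnit (Matrix.of fun i j =>
      b.repr (KaehlerDifferential.D F B (φ (X i))) j).det)
    (hmax : ∀ I : Ideal (MvPolynomial σ F), I.IsMaximal → (I.map φ).IsMaximal) :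
    Function.Surjective φ := by
  algebraize [φ.toRingHom]
  have : IsScalarTower F (MvPolynomial σ F) B := .of_algHom φ
  have : Algebra.FormallyEtale (MvPolynomial σ F) B :=
    formallyEtale_mvPolynomial_of_isUnit_jacobian b hdet
  have : Algebra.FinitePresentation (MvPolynomial σ F) B :=
    .of_restrict_scalars_finitePresentation F _ B
  have : Algebra.Etale (MvPolynomial σ F) B := {}
  have := faithfullyFlat_of_isMaximal_map (A := MvPolynomial σ F) (B := B) hmax
  have := isEpi_of_kaehlerIdeal_le_jacobson_bot <| kaehlerIdeal_le_jacobson_bot (F := F)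
    (A := MvPolynomial σ F) (B := B) fun _ _ => algHom_eq_of_isMaximal_map hmax
  exact surjective_algebraMap_of_faithfullyFlat_of_isEpi (A := MvPolynomial σ F)

theorem surjective_mvPolynomial_of_isUnit_jacobian_of_isMaximal_map
    (φ : MvPolynomial σ F →ₐ[F] MvPolynomial σ F)
    (hdet : IsUnit (Matrix.of fun i j => pderiv j (φ (X i))).det)
    (hmax : ∀ I : Ideal (MvPolynomial σ F), I.IsMaximal → (I.map φ).IsMaximal) :
    Function.Surjective φ :=
  surjective_of_isUnit_jacobian_of_isMaximal_map (KaehlerDifferential.mvPolynomialBasis F σ) φ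
    (by simpa using hdet) hmax

end Jacobian

section IdemSemiring

variable {α : Type*} [IdemSemiring α]

theorem mul_pow_le_pow_mul_of_mul_le_mul {a b : α} (hab : a * b ≤ b * a) (ha : a * a ≤ a) (k : ℕ) :
    (b * a) ^ (k + 1) ≤ b ^ (k + 1) * a := by
  have hcomm (k : ℕ) : a * b ^ k ≤ b ^ k * a := by
    induction k with
    | zero => simp
    | succ k ih =>
      calc a * b ^ (k + 1) = a * b * b ^ k := by rw [pow_succ', mul_assoc]
        _ ≤ b * a * b ^ k := by gcongr
        _ = b * (a * b ^ k) := mul_assoc _ _ _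
        _ ≤ b * (b ^ k * a) := by gcongr
        _ = b ^ (k + 1) * a := by rw [pow_succ', mul_assoc]
  induction k with
  | zero => simp
  | succ k ih =>
    calc (b * a) ^ (k + 2) = b * a * (b * a) ^ (k + 1) := pow_succ' _ _
      _ ≤ b * a * (b ^ (k + 1) * a) := by gcongr
      _ = b * (a * b ^ (k + 1)) * a := by simp only [mul_assoc]
      _ ≤ b * (b ^ (k + 1) * a) * a := mul_le_mul_left (mul_le_mul_right (hcomm _) b) a
      _ = b ^ (k + 2) * (a * a) := by simp only [pow_succ', mul_assoc]
      _ ≤ b ^ (k + 2) * a := by gcongr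

theorem le_of_le_add_sq_of_pow_eq_zero {t a : α} (htt : t * t ≤ t) (hta : t ≤ a)
    (ha : a ≤ t + a ^ 2) {k : ℕ} (hk : a ^ (k + 1) = 0) : a ≤ t := by
  have hle (k : ℕ) : a ≤ t + a ^ (k + 1) := by
    induction k with
    | zero => simp
    | succ k ih =>
      have hmul : t * a ≤ t + a ^ (k + 2) :=
        calc t * a ≤ t * (t + a ^ (k + 1)) := by gcongr
          _ = t * t + t * a ^ (k + 1) := mul_add _ _ _
          _ ≤ t + a * a ^ (k + 1) := by gcongr
          _ = t + a ^ (k + 2) := by rw [← pow_succ']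
      calc a ≤ t + a * a := by rwa [← sq]
        _ ≤ t + (t + a ^ (k + 1)) * a := by gcongr
        _ = t + t * a + a ^ (k + 2) := by rw [add_mul, ← pow_succ, ← add_assoc]
        _ ≤ t + (t + a ^ (k + 2)) + a ^ (k + 2) := by gcongr
        _ = t + a ^ (k + 2) := by simp only [add_eq_sup, ← sup_assoc, sup_idem, sup_right_idem]
  simpa [hk] using hle k

end IdemSemiring

theorem injective_of_surjective_of_isNoetherianRing {R : Type*} [Ring R] [IsNoetherianRing R]
    {f : R →+* R} (hf : Function.Surjective f) : Function.Injective f := by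
  have hmono : Monotone fun k : ℕ => RingHom.ker (f ^ k) :=
    monotone_nat_of_le_succ fun k x hx => by
      rw [RingHom.mem_ker] at hx ⊢
      rw [pow_succ', RingHom.mul_def, RingHom.comp_apply, hx, map_zero]
  obtain ⟨N, hN⟩ := monotone_stabilizes_iff_noetherian.mpr ‹IsNoetherianRing R› ⟨_, hmono⟩
  refine (injective_iff_map_eq_zero f).mpr fun x hx => ?_
  obtain ⟨y, rfl⟩ : ∃ y, (f ^ N) y = x := by
    rw [RingHom.coe_pow]
    exact hf.iterate N x
  have hy : y ∈ RingHom.ker (f ^ (N + 1)) := by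
    rwa [RingHom.mem_ker, pow_succ', RingHom.mul_def, RingHom.comp_apply]
  exact (hN (N + 1) N.le_succ).ge hy

theorem range_exteriorAlgebra_ι_pow_eq_bot {R M ι : Type*} [CommRing R] [AddCommGroup M]
    [Module R M] [Fintype ι] (b : Module.Basis ι R M) {k : ℕ} (hk : Fintype.card ι < k) :
    (LinearMap.range (ExteriorAlgebra.ι R : M →ₗ[R] _)) ^ k = ⊥ := by
  classical
  let : LinearOrder ι := linearOrderOfSTO WellOrderingRel
  have : IsEmpty (Set.powersetCard ι k) :=
    ⟨fun s => (s.2 ▸ s.1.card_le_univ).not_gt hk⟩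
  have : Subsingleton (⋀[R]^k M) := (b.exteriorPower k).repr.subsingleton
  exact Submodule.subsingleton_iff_eq_bot.mp this

section SuperBody

variable (F A V : Type*) [CommRing F] [CommRing A] [Algebra F A] [AddCommGroup V] [Module F V]

/-- The body map `A ⊗ Λ(V) → A` of a split superalgebra: the quotient by the odd generators. -/
noncomputable def superBody : A ⊗[F] ExteriorAlgebra F V →ₐ[F] A :=
  Algebra.TensorProduct.lift (AlgHom.id F A)
    ((Algebra.ofId F A).comp ExteriorAlgebra.algebraMapInv) fun _ _ => Commute.all _ _

/-- The soul of `A ⊗ Λ(V)`: the ideal generated by the odd generators. It is encoded as an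
`F`-submodule, so that its powers are those of the idempotent semiring of submodules. -/
noncomputable def superSoul : Submodule F (A ⊗[F] ExteriorAlgebra F V) :=
  LinearMap.ker (superBody F A V).toLinearMap

/-- The copy `1 ⊗ V` of the space of odd generators inside `A ⊗ Λ(V)`. -/
noncomputable def oddVectors : Submodule F (A ⊗[F] ExteriorAlgebra F V) :=
  (LinearMap.range (ExteriorAlgebra.ι F)).map
    (Algebra.TensorProduct.includeRight : ExteriorAlgebra F V →ₐ[F] A ⊗[F] _).toLinearMap

variable {F V}

/-- The `A`-linear odd left derivation of `A ⊗ Λ(V)` that extends the linear form `f` on `V`,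
namely contraction with `f`. -/
noncomputable def oddPartial (f : Module.Dual F V) :
    A ⊗[F] ExteriorAlgebra F V →ₗ[F] A ⊗[F] ExteriorAlgebra F V :=
  TensorProduct.map LinearMap.id (CliffordAlgebra.contractLeft (Q := 0) f)

variable {A}

@[simp]
theorem superBody_tmul (a : A) (l : ExteriorAlgebra F V) :
    superBody F A V (a ⊗ₜ l) = ExteriorAlgebra.algebraMapInv l • a := by
  simp [superBody, Algebra.ofId_apply, Algebra.smul_def, mul_comm]

theorem superBody_tmul_ι (a : A) (v : V) :
    superBody F A V (a ⊗ₜ ExteriorAlgebra.ι F v) = 0 := by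
  simp [ExteriorAlgebra.algebraMapInv]

theorem algHom_eq_comp_superBody [IsReduced A] (g : A ⊗[F] ExteriorAlgebra F V →ₐ[F] A) :
    g = (g.comp Algebra.TensorProduct.includeLeft).comp (superBody F A V) := by
  apply Algebra.TensorProduct.ext
  · ext
    simp
  · apply ExteriorAlgebra.hom_ext
    ext v
    have hsq : g (1 ⊗ₜ ExteriorAlgebra.ι F v) ^ 2 = 0 := by
      rw [← map_pow]
      simp [sq]
    simpa [ExteriorAlgebra.algebraMapInv] using hsq

theorem mem_superSoul {r : A ⊗[F] ExteriorAlgebra F V} :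
    r ∈ superSoul F A V ↔ superBody F A V r = 0 := Iff.rfl

theorem sub_superBody_tmul_one_mem_superSoul (r : A ⊗[F] ExteriorAlgebra F V) :
    r - superBody F A V r ⊗ₜ 1 ∈ superSoul F A V := by
  simp [mem_superSoul]

theorem top_mul_superSoul_le : ⊤ * superSoul F A V ≤ superSoul F A V :=
  Submodule.mul_le.mpr fun r _ s hs => by rw [mem_superSoul, map_mul, mem_superSoul.mp hs, mul_zero]

theorem superSoul_mul_top_le : superSoul F A V * ⊤ ≤ superSoul F A V :=
  Submodule.mul_le.mpr fun r hr s _ => by rw [mem_superSoul, map_mul, mem_superSoul.mp hr, zero_mul]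

theorem one_tmul_ι_mem_oddVectors (v : V) : 1 ⊗ₜ ExteriorAlgebra.ι F v ∈ oddVectors F A V :=
  ⟨_, ⟨v, rfl⟩, rfl⟩

theorem oddVectors_le_superSoul : oddVectors F A V ≤ superSoul F A V := by
  rintro _ ⟨_, ⟨v, rfl⟩, rfl⟩
  exact superBody_tmul_ι 1 v

theorem sub_superBody_tmul_one_mem_oddVectors_mul_top (r : A ⊗[F] ExteriorAlgebra F V) :
    r - superBody F A V r ⊗ₜ 1 ∈ oddVectors F A V * ⊤ := by
  induction r with
  | zero => simp
  | add r s hr hs =>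
    rw [map_add, add_tmul, add_sub_add_comm]
    exact add_mem hr hs
  | tmul a l =>
    induction l using CliffordAlgebra.left_induction with
    | algebraMap c => simp [Algebra.algebraMap_eq_smul_one, smul_tmul]
    | add l₁ l₂ h₁ h₂ =>
      rw [tmul_add, map_add, add_tmul, add_sub_add_comm]
      exact add_mem h₁ h₂
    | ι_mul l v _ =>
      have hmul : a ⊗ₜ[F] (ExteriorAlgebra.ι F v * l) =
          (1 ⊗ₜ ExteriorAlgebra.ι F v) * (a ⊗ₜ l) := by simp
      change a ⊗ₜ[F] (ExteriorAlgebra.ι F v * l) -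
        superBody F A V (a ⊗ₜ (ExteriorAlgebra.ι F v * l)) ⊗ₜ 1 ∈ _
      rw [hmul, map_mul, superBody_tmul_ι, zero_mul, zero_tmul, sub_zero]
      exact Submodule.mul_mem_mul (one_tmul_ι_mem_oddVectors v) Submodule.mem_top

theorem superSoul_eq_oddVectors_mul_top : superSoul F A V = oddVectors F A V * ⊤ := by
  apply le_antisymm
  · intro r hr
    simpa [mem_superSoul.mp hr] using sub_superBody_tmul_one_mem_oddVectors_mul_top r
  · exact (mul_le_mul_left oddVectors_le_superSoul ⊤).trans superSoul_mul_top_le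

theorem superBody_oddPartial_ι_mul (f : Module.Dual F V) (v : V) (r : A ⊗[F] ExteriorAlgebra F V) :
    superBody F A V (oddPartial A f ((1 ⊗ₜ ExteriorAlgebra.ι F v) * r)) =
      f v • superBody F A V r := by
  induction r with
  | zero => simp
  | add r s hr hs => rw [mul_add, map_add, map_add, hr, hs, map_add, smul_add]
  | tmul a l =>
    have hpartial : oddPartial A f (a ⊗ₜ (ExteriorAlgebra.ι F v * l)) = f v • (a ⊗ₜ l) -
        (1 ⊗ₜ ExteriorAlgebra.ι F v) * oddPartial A f (a ⊗ₜ l) := by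
      simp [oddPartial, ExteriorAlgebra.ι, CliffordAlgebra.contractLeft_ι_mul, tmul_sub]
    rw [Algebra.TensorProduct.tmul_mul_tmul, one_mul, hpartial, map_sub, map_smul, map_mul,
      superBody_tmul_ι, zero_mul, sub_zero]

theorem superSoul_pow_eq_bot {ι : Type*} [Fintype ι] (b : Module.Basis ι F V) :
    superSoul F A V ^ (Fintype.card ι + 1) = ⊥ := by
  have hcomm : ⊤ * oddVectors F A V ≤ oddVectors F A V * ⊤ := by
    rw [← superSoul_eq_oddVectors_mul_top]
    exact (mul_le_mul_right oddVectors_le_superSoul ⊤).trans top_mul_superSoul_le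
  rw [eq_bot_iff, superSoul_eq_oddVectors_mul_top]
  refine (mul_pow_le_pow_mul_of_mul_le_mul hcomm le_top _).trans ?_
  rw [oddVectors, ← Submodule.map_pow, range_exteriorAlgebra_ι_pow_eq_bot b (Nat.lt_succ_self _),
    Submodule.map_bot, Submodule.bot_mul]

theorem isUnit_of_superBody_eq_one {ι : Type*} [Finite ι] (b : Module.Basis ι F V)
    {r : A ⊗[F] ExteriorAlgebra F V} (h : superBody F A V r = 1) : IsUnit r := by
  have := Fintype.ofFinite ι
  have hmem : 1 - r ∈ superSoul F A V := by rw [mem_superSoul, map_sub, map_one, h, sub_self]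
  have hpow := Submodule.pow_mem_pow _ hmem (Fintype.card ι + 1)
  rw [superSoul_pow_eq_bot b, Submodule.mem_bot] at hpow
  simpa using IsNilpotent.isUnit_one_sub ⟨_, hpow⟩

variable {ι : Type*} [Fintype ι]

theorem sum_basis_coord_smul_tmul_ι (b : Module.Basis ι F V) (v : V) (a : A) :
    ∑ k, (b.coord k v • a) ⊗ₜ[F] ExteriorAlgebra.ι F (b k) = a ⊗ₜ ExteriorAlgebra.ι F v := by
  simp_rw [smul_tmul, ← map_smul, ← tmul_sum, ← map_sum, Module.Basis.coord_apply]
  rw [b.sum_repr]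

theorem sub_sum_oddPartial_tmul_mem_superSoul_sq (b : Module.Basis ι F V)
    {r : A ⊗[F] ExteriorAlgebra F V} (hr : r ∈ superSoul F A V) :
    r - ∑ k, superBody F A V (oddPartial A (b.coord k) r) ⊗ₜ ExteriorAlgebra.ι F (b k) ∈
      superSoul F A V ^ 2 := by
  rw [superSoul_eq_oddVectors_mul_top] at hr
  induction hr using Submodule.mul_induction_on' with
  | add r _ s _ hr hs =>
    simp only [map_add, add_tmul, Finset.sum_add_distrib, add_sub_add_comm]
    exact add_mem hr hs
  | mem_mul_mem w hw s _ =>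
    obtain ⟨_, ⟨v, rfl⟩, rfl⟩ := hw
    change (1 ⊗ₜ ExteriorAlgebra.ι F v) * s - ∑ k, superBody F A V (oddPartial A (b.coord k)
      ((1 ⊗ₜ ExteriorAlgebra.ι F v) * s)) ⊗ₜ ExteriorAlgebra.ι F (b k) ∈ _
    have hlin : superBody F A V s ⊗ₜ[F] ExteriorAlgebra.ι F v =
        (1 ⊗ₜ ExteriorAlgebra.ι F v) * (superBody F A V s ⊗ₜ 1) := by simp
    simp_rw [superBody_oddPartial_ι_mul]
    rw [sum_basis_coord_smul_tmul_ι, hlin, ← mul_sub, sq]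
    exact Submodule.mul_mem_mul (superBody_tmul_ι 1 v) (sub_superBody_tmul_one_mem_superSoul s)

variable (φ : A ⊗[F] ExteriorAlgebra F V →ₐ[F] A ⊗[F] ExteriorAlgebra F V)

/-- The Jacobian matrix `∂φ(ξ_k)/∂ξ_l` of an endomorphism `φ` of `A ⊗ Λ(V)` with respect to a
basis `ξ` of `V`, reduced modulo the soul. -/
noncomputable def oddJacobian (b : Module.Basis ι F V) : Matrix ι ι A :=
  Matrix.of fun k l =>
    superBody F A V (oddPartial A (b.coord l) (φ (1 ⊗ₜ ExteriorAlgebra.ι F (b k))))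

/-- The part of the soul of `A ⊗ Λ(V)` lying in the image of the endomorphism `φ`. -/
noncomputable def rangeSoul : Submodule F (A ⊗[F] ExteriorAlgebra F V) :=
  LinearMap.range φ.toLinearMap ⊓ superSoul F A V

variable {φ}

theorem rangeSoul_mul_rangeSoul_le : rangeSoul φ * rangeSoul φ ≤ rangeSoul φ :=
  Submodule.mul_le.mpr fun _ ⟨⟨s, hs⟩, _⟩ _ ⟨⟨t, ht⟩, ht'⟩ =>
    ⟨⟨s * t, by simp [← hs, ← ht]⟩,
      top_mul_superSoul_le (Submodule.mul_mem_mul Submodule.mem_top ht')⟩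

theorem exists_sub_map_mem_superSoul
    (hbody : Function.Surjective fun a => superBody F A V (φ (a ⊗ₜ 1)))
    (r : A ⊗[F] ExteriorAlgebra F V) : ∃ s, r - φ s ∈ superSoul F A V := by
  obtain ⟨a, ha⟩ := hbody (superBody F A V r)
  exact ⟨a ⊗ₜ 1, by rw [mem_superSoul, map_sub, ← ha, sub_self]⟩

theorem rangeSoul_add_sq_mul_top_le
    (hbody : Function.Surjective fun a => superBody F A V (φ (a ⊗ₜ 1))) :
    (rangeSoul φ + superSoul F A V ^ 2) * ⊤ ≤ rangeSoul φ + superSoul F A V ^ 2 := by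
  have hsq : superSoul F A V ^ 2 * ⊤ ≤ superSoul F A V ^ 2 := by
    rw [sq, mul_assoc]
    exact mul_le_mul_right superSoul_mul_top_le _
  rw [add_mul, Submodule.add_eq_sup, Submodule.add_eq_sup]
  refine sup_le (Submodule.mul_le.mpr ?_) (hsq.trans le_sup_right)
  rintro _ ⟨⟨t, rfl⟩, ht⟩ r -
  obtain ⟨s, hrs⟩ := exists_sub_map_mem_superSoul hbody r
  rw [← add_sub_cancel (φ s) r, mul_add]
  refine add_mem (Submodule.mem_sup_left ⟨⟨t * s, map_mul φ t s⟩, ?_⟩) (Submodule.mem_sup_right ?_)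
  · exact superSoul_mul_top_le (Submodule.mul_mem_mul ht Submodule.mem_top)
  · rw [sq]
    exact Submodule.mul_mem_mul ht hrs

variable [DecidableEq ι] {b : Module.Basis ι F V}

theorem one_tmul_ι_basis_mem_rangeSoul_add_sq
    (hsoul : ∀ k, φ (1 ⊗ₜ ExteriorAlgebra.ι F (b k)) ∈ superSoul F A V)
    (hbody : Function.Surjective fun a => superBody F A V (φ (a ⊗ₜ 1)))
    (hdet : IsUnit (oddJacobian φ b).det) (l : ι) :
    1 ⊗ₜ ExteriorAlgebra.ι F (b l) ∈ rangeSoul φ + superSoul F A V ^ 2 := by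
  have hrow (k : ι) : ∑ j, oddJacobian φ b k j ⊗ₜ ExteriorAlgebra.ι F (b j) ∈
      rangeSoul φ + superSoul F A V ^ 2 := by
    rw [← sub_sub_self (φ (1 ⊗ₜ ExteriorAlgebra.ι F (b k))) (∑ j, _)]
    exact sub_mem (Submodule.mem_sup_left ⟨⟨_, rfl⟩, hsoul k⟩)
      (Submodule.mem_sup_right (sub_sum_oddPartial_tmul_mem_superSoul_sq b (hsoul k)))
  have hinv : (1 : A) ⊗ₜ[F] ExteriorAlgebra.ι F (b l) =
      ∑ k, (∑ j, oddJacobian φ b k j ⊗ₜ ExteriorAlgebra.ι F (b j)) *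
        ((oddJacobian φ b)⁻¹ l k ⊗ₜ 1) := by
    simp_rw [Finset.sum_mul, Algebra.TensorProduct.tmul_mul_tmul, mul_one,
      mul_comm _ ((oddJacobian φ b)⁻¹ l _)]
    rw [Finset.sum_comm]
    simp_rw [← sum_tmul, ← Matrix.mul_apply, Matrix.nonsing_inv_mul _ hdet, Matrix.one_apply,
      ite_tmul]
    simp
  rw [hinv]
  exact Submodule.sum_mem _ fun k _ => rangeSoul_add_sq_mul_top_le hbody <|
    Submodule.mul_mem_mul (hrow k) Submodule.mem_top

theorem superSoul_le_rangeSoul_add_sq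
    (hsoul : ∀ k, φ (1 ⊗ₜ ExteriorAlgebra.ι F (b k)) ∈ superSoul F A V)
    (hbody : Function.Surjective fun a => superBody F A V (φ (a ⊗ₜ 1)))
    (hdet : IsUnit (oddJacobian φ b).det) :
    superSoul F A V ≤ rangeSoul φ + superSoul F A V ^ 2 := by
  have hodd : oddVectors F A V ≤ rangeSoul φ + superSoul F A V ^ 2 := by
    rw [oddVectors, LinearMap.range_eq_map, ← b.span_eq, Submodule.map_span, Submodule.map_span,
      Submodule.span_le]
    rintro _ ⟨_, ⟨_, ⟨l, rfl⟩, rfl⟩, rfl⟩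
    exact one_tmul_ι_basis_mem_rangeSoul_add_sq hsoul hbody hdet l
  exact superSoul_eq_oddVectors_mul_top.le.trans <|
    (mul_le_mul_left hodd _).trans (rangeSoul_add_sq_mul_top_le hbody)

theorem surjective_of_isUnit_oddJacobian
    (hsoul : ∀ k, φ (1 ⊗ₜ ExteriorAlgebra.ι F (b k)) ∈ superSoul F A V)
    (hbody : Function.Surjective fun a => superBody F A V (φ (a ⊗ₜ 1)))
    (hdet : IsUnit (oddJacobian φ b).det) :
    Function.Surjective φ := by
  have hle : superSoul F A V ≤ rangeSoul φ :=
    le_of_le_add_sq_of_pow_eq_zero rangeSoul_mul_rangeSoul_le inf_le_right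
      (superSoul_le_rangeSoul_add_sq hsoul hbody hdet) (superSoul_pow_eq_bot b)
  intro r
  obtain ⟨s, hrs⟩ := exists_sub_map_mem_superSoul hbody r
  obtain ⟨⟨t, ht⟩, -⟩ := hle hrs
  exact ⟨t + s, by rw [map_add, ← sub_add_cancel r (φ s), ← ht]; rfl⟩

end SuperBody

theorem map_sdet {R A : Type*} [Ring R] [CommRing A] (f : R →+* A) {N : ℕ}
    (M : Matrix (Fin N) (Fin N) R) : f (sdet M) = (M.map f).det := by
  rw [sdet, Matrix.det_apply, map_sum]
  refine Finset.sum_congr rfl fun σ _ => ?_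
  rw [map_zsmul, map_list_prod, List.map_map, ← List.prod_ofFn (n := N), List.ofFn_eq_map]
  rfl

section PolynomialSuperalgebra

variable {F : Type*} [Field F] {m n : ℕ}

instance isNoetherianRing_SAlg : IsNoetherianRing (SAlg F m n) := by
  have : Module.Finite F (ExtA F n) := .of_basis (Pi.basisFun F (Fin n)).ExteriorAlgebra
  exact isNoetherian_of_tower (PolyA F m) inferInstance

theorem projP_eq_superBody : projP F m n = superBody F (PolyA F m) (Fin n → F) := rfl

theorem Dxi_eq_oddPartial (l : Fin n) :
    Dxi F m n l = oddPartial (PolyA F m) ((Pi.basisFun F (Fin n)).coord l) := rfl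

theorem xig_eq_one_tmul_ι (k : Fin n) :
    xig F m n k = 1 ⊗ₜ ExteriorAlgebra.ι F (Pi.basisFun F (Fin n) k) := by
  simp [xig]

theorem projP_surjective : Function.Surjective (projP F m n) := fun p =>
  ⟨p ⊗ₜ 1, by simp [projP_eq_superBody]⟩

theorem projP_Dx (j : Fin m) (r : SAlg F m n) :
    projP F m n (Dx F m n j r) = pderiv j (projP F m n r) := by
  rw [projP_eq_superBody]
  induction r using TensorProduct.induction_on with
  | zero => simp
  | add r s hr hs => simp only [map_add, hr, hs]
  | tmul p l => simp [Dx]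

theorem Jg_le_ker_projP : Jg F m n ≤ RingHom.ker (projP F m n) := by
  rw [Jg, Ideal.span_le]
  rintro _ ⟨k, rfl⟩
  exact superBody_tmul_ι 1 _

theorem isUnit_det_map_projP {N : ℕ} {M : Matrix (Fin N) (Fin N) (SAlg F m n)}
    (h : ∃ c : F, c ≠ 0 ∧ sdet M - algebraMap F (SAlg F m n) c ∈ Jg F m n) :
    IsUnit (M.map (projP F m n)).det := by
  obtain ⟨c, hc, hM⟩ := h
  have hproj : projP F m n (sdet M) = algebraMap F (PolyA F m) c := by
    rw [← sub_eq_zero, ← AlgHom.commutes (projP F m n), ← map_sub]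
    exact Jg_le_ker_projP hM
  have hdet := map_sdet (projP F m n : SAlg F m n →+* PolyA F m) M
  rw [RingHom.coe_coe, hproj] at hdet
  rw [← hdet]
  exact (IsUnit.mk0 c hc).map _

/-- The endomorphism of `F[x] = R/J` induced by an endomorphism `φ` of `R`, obtained by restricting
`φ` to `F[x] ⊆ R` and reducing modulo `J`. -/
noncomputable def bodyMap (φ : SAlg F m n →ₐ[F] SAlg F m n) : PolyA F m →ₐ[F] PolyA F m :=
  ((projP F m n).comp φ).comp Algebra.TensorProduct.includeLeft

theorem bodyMap_projP (φ : SAlg F m n →ₐ[F] SAlg F m n) (r : SAlg F m n) :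
    bodyMap φ (projP F m n r) = projP F m n (φ r) :=
  (DFunLike.congr_fun (algHom_eq_comp_superBody ((projP F m n).comp φ)) r).symm

theorem projP_parityInvol (r : SAlg F m n) :
    projP F m n (parityInvol F m n r) = projP F m n r := by
  rw [← bodyMap_projP]
  suffices h : bodyMap (parityInvol F m n) = AlgHom.id F (PolyA F m) from DFunLike.congr_fun h _
  ext1 i
  simp [bodyMap, parityInvol, projP_eq_superBody]

theorem projP_eq_zero_of_mem_oddP (hchar : ringChar F ≠ 2) {r : SAlg F m n}
    (hr : r ∈ oddP F m n) : projP F m n r = 0 := by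
  have htwo : (2 : F) • projP F m n r = 0 := by
    rw [two_smul]
    nth_rw 1 [← projP_parityInvol]
    rw [← map_add]
    exact (congrArg _ hr).trans (map_zero _)
  exact (smul_eq_zero.mp htwo).resolve_left (Ring.two_ne_zero hchar)

theorem isHomog_comap_projP (hchar : ringChar F ≠ 2) (P : Ideal (PolyA F m)) :
    IsHomog F m n (P.comap (projP F m n)) := fun a _ b hb hab => by
  have hbP : b ∈ P.comap (projP F m n) := by
    rw [Ideal.mem_comap, projP_eq_zero_of_mem_oddP hchar hb]
    exact P.zero_mem
  exact ⟨(Ideal.add_mem_iff_left _ hbP).mp hab, hbP⟩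

theorem map_projP_ne_top {K : Ideal (SAlg F m n)} (hK : K ≠ ⊤) : K.map (projP F m n) ≠ ⊤ := by
  intro h
  obtain ⟨r, hr, hr1⟩ := (Ideal.mem_map_iff_of_surjective (projP F m n) projP_surjective).mp
    (h.ge (Submodule.mem_top (x := 1)))
  exact hK (K.eq_top_of_isUnit_mem hr (isUnit_of_superBody_eq_one (Pi.basisFun F (Fin n)) hr1))

theorem isMaxHomog_iff (hchar : ringChar F ≠ 2) {K : Ideal (SAlg F m n)} :
    IsMaxHomog F m n K ↔
      ∃ P : Ideal (PolyA F m), P.IsMaximal ∧ K = P.comap (projP F m n) := by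
  constructor
  · rintro ⟨-, hne, hmax⟩
    obtain ⟨P, hP, hle⟩ := Ideal.exists_le_maximal _ (map_projP_ne_top hne)
    exact ⟨P, hP, (hmax _ (isHomog_comap_projP hchar P) (Ideal.comap_ne_top _ hP.ne_top)
      (Ideal.map_le_iff_le_comap.mp hle)).symm⟩
  · rintro ⟨P, hP, rfl⟩
    refine ⟨isHomog_comap_projP hchar P, Ideal.comap_ne_top _ hP.ne_top, fun K _ hK hle => ?_⟩
    have hPK : P = K.map (projP F m n) := by
      refine hP.eq_of_le (map_projP_ne_top hK) ?_
      rw [← Ideal.map_comap_of_surjective (projP F m n) projP_surjective P]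
      exact Ideal.map_mono hle
    exact le_antisymm (Ideal.map_le_iff_le_comap.mp hPK.ge) hle

theorem isMaximal_map_bodyMap (hchar : ringChar F ≠ 2) {φ : SAlg F m n →ₐ[F] SAlg F m n}
    (hmax : ∀ I : Ideal (SAlg F m n), IsMaxHomog F m n I →
      IsMaxHomog F m n (Ideal.map φ.toRingHom I))
    (P : Ideal (PolyA F m)) (hP : P.IsMaximal) : (P.map (bodyMap φ)).IsMaximal := by
  obtain ⟨Q, hQ, hPQ⟩ := (isMaxHomog_iff hchar).mp
    (hmax _ ((isMaxHomog_iff hchar).mpr ⟨P, hP, rfl⟩))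
  have hcomm : (projP F m n : SAlg F m n →+* PolyA F m).comp φ.toRingHom =
      (bodyMap φ : PolyA F m →+* PolyA F m).comp (projP F m n) :=
    RingHom.ext fun r => (bodyMap_projP φ r).symm
  have heq : P.map (bodyMap φ) = Q :=
    calc P.map (bodyMap φ) = ((P.comap (projP F m n)).map (projP F m n)).map (bodyMap φ) := by
          rw [Ideal.map_comap_of_surjective (projP F m n) projP_surjective]
      _ = ((P.comap (projP F m n)).map φ.toRingHom).map (projP F m n) := by
          simp only [← Ideal.map_coe (projP F m n), ← Ideal.map_coe (bodyMap φ)]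
          rw [Ideal.map_map, Ideal.map_map, hcomm]
      _ = Q := by rw [hPQ, Ideal.map_comap_of_surjective (projP F m n) projP_surjective]
  rwa [heq]

end PolynomialSuperalgebra

theorem super_jacobian_automorphism_general (F : Type*) [Field F] [IsAlgClosed F]
    (hchar : ringChar F ≠ 2) (m n : ℕ) (φ : SAlg F m n →ₐ[F] SAlg F m n)
    (hJx : ∃ c : F, c ≠ 0 ∧
      sdet (Matrix.of fun i j => Dx F m n j (φ (xg F m n i)))
        - algebraMap F (SAlg F m n) c ∈ Jg F m n)
    (hJξ : ∃ c : F, c ≠ 0 ∧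
      sdet (Matrix.of fun k l => Dxi F m n l (φ (xig F m n k)))
        - algebraMap F (SAlg F m n) c ∈ Jg F m n)
    (hmax : ∀ I : Ideal (SAlg F m n), IsMaxHomog F m n I →
      IsMaxHomog F m n (Ideal.map φ.toRingHom I)) :
    Function.Bijective φ := by
  have hbody : Function.Surjective (bodyMap φ) := by
    refine surjective_mvPolynomial_of_isUnit_jacobian_of_isMaximal_map _ ?_
      (isMaximal_map_bodyMap hchar hmax)
    convert isUnit_det_map_projP hJx using 2
    ext1 i j
    exact (projP_Dx j _).symm
  have hsurj : Function.Surjective φ := by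
    refine surjective_of_isUnit_oddJacobian (b := Pi.basisFun F (Fin n)) (fun k => ?_) hbody ?_
    · rw [mem_superSoul, ← projP_eq_superBody, ← bodyMap_projP, projP_eq_superBody,
        superBody_tmul_ι, map_zero]
    · convert isUnit_det_map_projP hJξ using 2
      ext1 k l
      simp [oddJacobian, xig_eq_one_tmul_ι, projP_eq_superBody, Dxi_eq_oddPartial]
  exact ⟨injective_of_surjective_of_isNoetherianRing (f := φ.toRingHom) hsurj, hsurj⟩

/-- Main theorem: over an algebraically closed field, a parity-preserving endomorphism of
the polynomial superalgebra satisfying the super-Jacobian condition which maps maximal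
`ℤ₂`-homogeneous ideals to maximal `ℤ₂`-homogeneous ideals is an automorphism. -/
theorem super_jacobian_automorphism (F : Type*) [Field F] [IsAlgClosed F]
    (hchar : ringChar F ≠ 2) (m n : ℕ) (φ : SAlg F m n →ₐ[F] SAlg F m n)
    (hev : ∀ a ∈ evenA F m n, φ a ∈ evenA F m n)
    (hod : ∀ b ∈ oddP F m n, φ b ∈ oddP F m n)
    (hJx : ∃ c : F, c ≠ 0 ∧
      sdet (Matrix.of fun i j => Dx F m n j (φ (xg F m n i)))
        - algebraMap F (SAlg F m n) c ∈ Jg F m n)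
    (hJξ : ∃ c : F, c ≠ 0 ∧
      sdet (Matrix.of fun k l => Dxi F m n l (φ (xig F m n k)))
        - algebraMap F (SAlg F m n) c ∈ Jg F m n)
    (hmax : ∀ I : Ideal (SAlg F m n), IsMaxHomog F m n I →
      IsMaxHomog F m n (Ideal.map φ.toRingHom I)) :
    Function.Bijective φ := by
  exact super_jacobian_automorphism_general F hchar m n φ hJx hJξ hmax
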